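/- Let n ≥ 2 be an integer, let γ ⊆ {1,…,n} have cardinality k with 1 ≤ k ≤ n−1, and let 0 < σ²_min < σ²_max. For c ∈ ℝⁿ with S_γ(c) > 0, S(c) − S_γ(c) > 0, and with maximum likelihood variance estimates in [σ²_min, σ²_max], the exact normalized maximum likelihood code length satisfies −ln f_nml(c) = (k/2) ln S_γ(c) + ((n−k)/2) ln (S(c) − S_γ(c)) − ln Γ(k/2) − ln Γ((n−k)/2) + (n/2) ln π + 2 ln ln(σ²_max/σ²_min), where f_nml is the maximized likelihood Π_{i∈γ} φ(c_i; 0, S_γ(c)/k) Π_{i∉γ} φ(c_i; 0, (S(c)−S_γ(c))/(n−k)) normalized by its integral over the region R = {c′ ∈ ℝⁿ : σ²_min ≤ S_γ(c′)/k ≤ σ²_max, σ²_min ≤ (S(c′) − S_γ(c′))/(n−k) ≤ σ²_max}. -/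

import Mathlib

open MeasureTheory Real Finset

/-- `Sg γ c = ∑_{i ∈ γ} c_i²`. -/
noncomputable def Sg {n : ℕ} (γ : Finset (Fin n)) (c : Fin n → ℝ) : ℝ :=
  ∑ i ∈ γ, (c i) ^ 2

/-- `Stot c = ∑_{i=1}^n c_i²`. -/
noncomputable def Stot {n : ℕ} (c : Fin n → ℝ) : ℝ :=
  ∑ i, (c i) ^ 2

/-- Centered Gaussian density `φ(x; 0, σ²) = (2πσ²)^{-1/2} exp(-x²/(2σ²))`. -/
noncomputable def gauss (x σ2 : ℝ) : ℝ :=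
  (2 * Real.pi * σ2) ^ (-(1 : ℝ) / 2) * Real.exp (-(x ^ 2) / (2 * σ2))

/-- The maximized likelihood of `c` under the extended model with retained set `γ`. -/
noncomputable def maxLik {n : ℕ} (γ : Finset (Fin n)) (c : Fin n → ℝ) : ℝ :=
  (∏ i ∈ γ, gauss (c i) (Sg γ c / γ.card)) *
    ∏ i ∈ γᶜ, gauss (c i) ((Stot c - Sg γ c) / ((n : ℝ) - γ.card))

/-!
The likelihood and the region both factor over the blocks `γ` and `γᶜ`, so `f_nml` is the product of
the normalized maximum likelihood densities of two independent centered Gaussian samples. For one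
sample of size `m` and energy `s = ∑ xᵢ²`, the maximized likelihood is `C * s ^ (-m / 2)` with `C`
depending only on `m`. Since Lebesgue measure on `ℝᵐ` pushes forward under the energy to
`π ^ (m / 2) / Γ(m / 2) * s ^ (m / 2 - 1) ds`, the normalizing integral is that of `ds / s` up to
constants: it contributes `log (σ²_max / σ²_min)`, and `C` cancels in the quotient.
-/

theorem nonempty_index_of_sum_ne_zero {ι M : Type*} [Fintype ι] [AddCommMonoid M] {f : ι → M}
    (hf : ∑ i, f i ≠ 0) : Nonempty ι :=
  univ_nonempty_iff.1 (nonempty_of_sum_ne_zero hf)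

theorem cast_card_subtype_notMem {α R : Type*} [Fintype α] [AddGroupWithOne R] (s : Finset α)
    [Fintype {i // i ∉ s}] : (Fintype.card {i // i ∉ s} : R) = Fintype.card α - s.card := by
  rw [Fintype.card_subtype_compl, Fintype.card_coe, Nat.cast_sub (card_le_univ s)]

section Radial

variable {ι F : Type*} [Fintype ι] [NormedAddCommGroup F] [NormedSpace ℝ F]

theorem integral_Ioi_pow_smul_comp_sq {m : ℕ} (hm : m ≠ 0) (f : ℝ → F) :
    (2 : ℝ) • ∫ r in Set.Ioi (0 : ℝ), r ^ (m - 1) • f (r ^ 2) =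
      ∫ s in Set.Ioi (0 : ℝ), s ^ ((m : ℝ) / 2 - 1) • f s := by
  rw [← integral_comp_rpow_Ioi_of_pos (g := fun s ↦ s ^ ((m : ℝ) / 2 - 1) • f s) zero_lt_two,
    ← integral_smul]
  refine setIntegral_congr_fun measurableSet_Ioi fun r (hr : 0 < r) ↦ ?_
  have hpow : r ^ ((2 : ℝ) - 1) * (r ^ 2) ^ ((m : ℝ) / 2 - 1) = r ^ (m - 1) := by
    rw [← rpow_two, ← rpow_mul hr.le, ← rpow_add hr, ← rpow_natCast,
      Nat.cast_pred (Nat.pos_of_ne_zero hm)]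
    ring_nf
  simp only [smul_smul, mul_assoc, rpow_two, hpow]

theorem integral_comp_sum_sq [Nonempty ι] (f : ℝ → F) :
    ∫ x : ι → ℝ, f (∑ i, x i ^ 2) =
      (π ^ ((Fintype.card ι : ℝ) / 2) / Gamma ((Fintype.card ι : ℝ) / 2)) •
        ∫ s in Set.Ioi (0 : ℝ), s ^ ((Fintype.card ι : ℝ) / 2 - 1) • f s := by
  have hm : 0 < (Fintype.card ι : ℝ) / 2 := by positivity
  have hsqrt : √π ^ Fintype.card ι = π ^ ((Fintype.card ι : ℝ) / 2) := by
    rw [sqrt_eq_rpow, ← rpow_mul_natCast pi_pos.le]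
    ring_nf
  have hball : (volume : Measure (EuclideanSpace ℝ ι)).real (Metric.ball 0 1) =
      π ^ ((Fintype.card ι : ℝ) / 2) / (Fintype.card ι / 2 * Gamma ((Fintype.card ι : ℝ) / 2)) := by
    rw [measureReal_def, EuclideanSpace.volume_ball, Gamma_add_one hm.ne', hsqrt,
      ENNReal.ofReal_one, one_pow, one_mul, ENNReal.toReal_ofReal (by positivity)]
  calc ∫ x : ι → ℝ, f (∑ i, x i ^ 2) = ∫ x : EuclideanSpace ℝ ι, f (‖x‖ ^ 2) := by
        simp only [EuclideanSpace.real_norm_sq_eq]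
        exact ((EuclideanSpace.volume_preserving_symm_measurableEquiv_toLp ι).integral_comp'
          (fun x : ι → ℝ ↦ f (∑ i, x i ^ 2))).symm
    _ = _ := by
        rw [integral_fun_norm_addHaar volume (fun r ↦ f (r ^ 2)), finrank_euclideanSpace, hball,
          ← integral_Ioi_pow_smul_comp_sq Fintype.card_ne_zero, ← Nat.cast_smul_eq_nsmul ℝ,
          smul_smul, smul_smul]
        congr 1
        field_simp

theorem setIntegral_comp_sum_sq [Nonempty ι] {T : Set ℝ} (hT : MeasurableSet T)
    (hT₀ : T ⊆ Set.Ioi 0) (f : ℝ → F) :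
    ∫ x in {x : ι → ℝ | ∑ i, x i ^ 2 ∈ T}, f (∑ i, x i ^ 2) =
      (π ^ ((Fintype.card ι : ℝ) / 2) / Gamma ((Fintype.card ι : ℝ) / 2)) •
        ∫ s in T, s ^ ((Fintype.card ι : ℝ) / 2 - 1) • f s := by
  have hmeas : Measurable fun x : ι → ℝ ↦ ∑ i, x i ^ 2 := by fun_prop
  calc ∫ x in {x : ι → ℝ | ∑ i, x i ^ 2 ∈ T}, f (∑ i, x i ^ 2) =
        ∫ x : ι → ℝ, T.indicator f (∑ i, x i ^ 2) :=
        (integral_indicator (hmeas hT)).symm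
    _ = _ := by
        rw [integral_comp_sum_sq]
        simp_rw [← Set.indicator_smul_apply T fun s : ℝ ↦ s ^ ((Fintype.card ι : ℝ) / 2 - 1)]
        rw [setIntegral_indicator hT, Set.inter_eq_right.2 hT₀]

theorem integral_Icc_rpow_sub_one_mul_rpow_neg {A B : ℝ} (hA : 0 < A) (hAB : A ≤ B) (p : ℝ) :
    ∫ s in Set.Icc A B, s ^ (p - 1) * s ^ (-p) = log (B / A) := by
  calc ∫ s in Set.Icc A B, s ^ (p - 1) * s ^ (-p) = ∫ s in Set.Icc A B, s⁻¹ := by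
        refine setIntegral_congr_fun measurableSet_Icc fun s hs ↦ ?_
        rw [← rpow_add (hA.trans_le hs.1), ← rpow_neg_one]
        ring_nf
    _ = log (B / A) := by
        rw [integral_Icc_eq_integral_Ioc, ← intervalIntegral.integral_of_le hAB,
          integral_inv_of_pos hA (hA.trans_le hAB)]

end Radial

theorem setIntegral_subtype_mul_compl {ι 𝕜 : Type*} {X : ι → Type*} [Fintype ι] [RCLike 𝕜]
    [∀ i, MeasureSpace (X i)] [∀ i, SigmaFinite (volume : Measure (X i))]
    (p : ι → Prop) [Fintype {i // p i}] [Fintype {i // ¬p i}]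
    (f : (∀ i : {i // p i}, X i) → 𝕜) (g : (∀ i : {i // ¬p i}, X i) → 𝕜)
    (s : Set (∀ i : {i // p i}, X i)) (t : Set (∀ i : {i // ¬p i}, X i)) :
    ∫ c in {c : ∀ i, X i | (fun i : {i // p i} ↦ c i) ∈ s ∧ (fun i : {i // ¬p i} ↦ c i) ∈ t},
        f (fun i ↦ c i) * g (fun i ↦ c i) =
      (∫ x in s, f x) * ∫ y in t, g y := by
  classical
  have hpres : MeasurePreserving (MeasurableEquiv.piEquivPiSubtypeProd X p) volume volume := by
    convert volume_preserving_piEquivPiSubtypeProd X p <;> rfl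
  rw [← setIntegral_prod_mul, ← Measure.volume_eq_prod,
    ← hpres.setIntegral_preimage_emb (MeasurableEquiv.measurableEmbedding _)]
  rfl

section OneBlock

variable {ι : Type*} [Fintype ι]

/-- The maximum likelihood estimate of the variance of a centered Gaussian sample `x`. -/
noncomputable def mleVariance (x : ι → ℝ) : ℝ :=
  (∑ i, x i ^ 2) / Fintype.card ι

/-- The likelihood of a centered Gaussian sample `x` at its maximum likelihood variance. -/
noncomputable def maxGaussLik (x : ι → ℝ) : ℝ :=
  ∏ i, gauss (x i) (mleVariance x)

/-- The normalized maximum likelihood density of a centered Gaussian sample, the normalizing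
integral running over the samples whose estimated variance lies in `[a, b]`. -/
noncomputable def gaussNML (a b : ℝ) (x : ι → ℝ) : ℝ :=
  maxGaussLik x / ∫ y in {y : ι → ℝ | mleVariance y ∈ Set.Icc a b}, maxGaussLik y

theorem prod_gauss (x : ι → ℝ) {v : ℝ} (hv : 0 ≤ v) :
    ∏ i, gauss (x i) v =
      (2 * π * v) ^ (-((Fintype.card ι : ℝ) / 2)) * exp (-(∑ i, x i ^ 2) / (2 * v)) := by
  simp only [gauss, prod_mul_distrib, prod_const, card_univ, ← exp_sum, ← sum_div,
    sum_neg_distrib]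
  rw [← rpow_mul_natCast (by positivity)]
  ring_nf

theorem maxGaussLik_eq {x : ι → ℝ} (hx : 0 < ∑ i, x i ^ 2) :
    maxGaussLik x = (2 * π * exp 1 / Fintype.card ι) ^ (-((Fintype.card ι : ℝ) / 2)) *
      (∑ i, x i ^ 2) ^ (-((Fintype.card ι : ℝ) / 2)) := by
  have := nonempty_index_of_sum_ne_zero hx.ne'
  have hexp : -(∑ i, x i ^ 2) / (2 * mleVariance x) = -((Fintype.card ι : ℝ) / 2) := by
    rw [mleVariance]
    field_simp
  have hv : 0 ≤ mleVariance x := by rw [mleVariance]; positivity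
  rw [maxGaussLik, prod_gauss x hv, hexp, ← exp_one_rpow,
    ← mul_rpow (by positivity) (by positivity), ← mul_rpow (by positivity) (by positivity),
    mleVariance]
  ring_nf

theorem setIntegral_maxGaussLik [Nonempty ι] {a b : ℝ} (ha : 0 < a) (hab : a ≤ b) :
    ∫ x in {x : ι → ℝ | mleVariance x ∈ Set.Icc a b}, maxGaussLik x =
      (2 * π * exp 1 / Fintype.card ι) ^ (-((Fintype.card ι : ℝ) / 2)) *
        (π ^ ((Fintype.card ι : ℝ) / 2) / Gamma ((Fintype.card ι : ℝ) / 2) * log (b / a)) := by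
  set m : ℝ := (Fintype.card ι : ℝ) with hm_def
  have hm : 0 < m := by positivity
  have hpos : Set.Icc (a * m) (b * m) ⊆ Set.Ioi 0 := fun s hs ↦ (mul_pos ha hm).trans_le hs.1
  have hregion : {x : ι → ℝ | mleVariance x ∈ Set.Icc a b} =
      {x | ∑ i, x i ^ 2 ∈ Set.Icc (a * m) (b * m)} := by
    ext x
    simp only [mleVariance, Set.mem_ofPred_eq, Set.mem_Icc, ← hm_def, le_div_iff₀ hm,
      div_le_iff₀ hm]
  have hmeas : MeasurableSet {x : ι → ℝ | ∑ i, x i ^ 2 ∈ Set.Icc (a * m) (b * m)} :=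
    measurableSet_Icc.preimage (by fun_prop)
  rw [hregion, setIntegral_congr_fun hmeas fun x hx ↦ maxGaussLik_eq (hpos hx),
    integral_const_mul, setIntegral_comp_sum_sq measurableSet_Icc hpos (· ^ (-(m / 2)))]
  simp only [smul_eq_mul]
  rw [integral_Icc_rpow_sub_one_mul_rpow_neg (mul_pos ha hm) (by gcongr),
    mul_div_mul_right _ _ hm.ne']

theorem gaussNML_eq {a b : ℝ} (ha : 0 < a) (hab : a < b) {x : ι → ℝ} (hx : 0 < ∑ i, x i ^ 2) :
    gaussNML a b x =
      Gamma ((Fintype.card ι : ℝ) / 2) * (∑ i, x i ^ 2) ^ (-((Fintype.card ι : ℝ) / 2)) /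
        (π ^ ((Fintype.card ι : ℝ) / 2) * log (b / a)) := by
  have := nonempty_index_of_sum_ne_zero hx.ne'
  rw [gaussNML, setIntegral_maxGaussLik ha hab.le, maxGaussLik_eq hx]
  field_simp

theorem gaussNML_pos {a b : ℝ} (ha : 0 < a) (hab : a < b) {x : ι → ℝ} (hx : 0 < ∑ i, x i ^ 2) :
    0 < gaussNML a b x := by
  have := nonempty_index_of_sum_ne_zero hx.ne'
  have hlog : 0 < log (b / a) := log_pos ((one_lt_div ha).2 hab)
  rw [gaussNML_eq ha hab hx]
  positivity

theorem neg_log_gaussNML {a b : ℝ} (ha : 0 < a) (hab : a < b) {x : ι → ℝ}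
    (hx : 0 < ∑ i, x i ^ 2) :
    -log (gaussNML a b x) = (Fintype.card ι : ℝ) / 2 * log (∑ i, x i ^ 2)
      - log (Gamma ((Fintype.card ι : ℝ) / 2)) + (Fintype.card ι : ℝ) / 2 * log π
      + log (log (b / a)) := by
  have := nonempty_index_of_sum_ne_zero hx.ne'
  have hlog : 0 < log (b / a) := log_pos ((one_lt_div ha).2 hab)
  have hΓ : 0 < Gamma ((Fintype.card ι : ℝ) / 2) := by positivity
  rw [gaussNML_eq ha hab hx, log_div (by positivity) (by positivity),
    log_mul hΓ.ne' (by positivity), log_mul (by positivity) hlog.ne', log_rpow hx, log_rpow pi_pos]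
  ring

end OneBlock

section TwoBlocks

variable {n : ℕ} (γ : Finset (Fin n))

theorem sum_sq_mem_eq_Sg (c : Fin n → ℝ) : ∑ i : {i // i ∈ γ}, c i ^ 2 = Sg γ c :=
  sum_coe_sort γ (c · ^ 2)

theorem sum_sq_notMem_eq_Stot_sub_Sg (c : Fin n → ℝ) :
    ∑ i : {i // i ∉ γ}, c i ^ 2 = Stot c - Sg γ c := by
  rw [← sum_subtype γᶜ (fun _ ↦ mem_compl) (c · ^ 2), Stot, Sg, ← sum_compl_add_sum γ,
    add_sub_cancel_right]

theorem mleVariance_mem (c : Fin n → ℝ) :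
    mleVariance (fun i : {i // i ∈ γ} ↦ c i) = Sg γ c / γ.card := by
  rw [mleVariance, sum_sq_mem_eq_Sg, Fintype.card_coe]

theorem mleVariance_notMem (c : Fin n → ℝ) :
    mleVariance (fun i : {i // i ∉ γ} ↦ c i) = (Stot c - Sg γ c) / (n - γ.card) := by
  rw [mleVariance, sum_sq_notMem_eq_Stot_sub_Sg, cast_card_subtype_notMem, Fintype.card_fin]

theorem maxLik_eq_mul (c : Fin n → ℝ) :
    maxLik γ c =
      maxGaussLik (fun i : {i // i ∈ γ} ↦ c i) * maxGaussLik (fun i : {i // i ∉ γ} ↦ c i) := by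
  rw [maxLik, maxGaussLik, maxGaussLik, mleVariance_mem, mleVariance_notMem,
    prod_coe_sort γ fun i ↦ gauss (c i) (Sg γ c / γ.card),
    prod_subtype γᶜ (fun _ ↦ mem_compl)]

theorem maxLik_div_setIntegral (c : Fin n → ℝ) (a₁ b₁ a₂ b₂ : ℝ) :
    maxLik γ c / ∫ c' in {c' : Fin n → ℝ | Sg γ c' / γ.card ∈ Set.Icc a₁ b₁ ∧
        (Stot c' - Sg γ c') / ((n : ℝ) - γ.card) ∈ Set.Icc a₂ b₂}, maxLik γ c' =
      gaussNML a₁ b₁ (fun i : {i // i ∈ γ} ↦ c i) *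
        gaussNML a₂ b₂ (fun i : {i // i ∉ γ} ↦ c i) := by
  simp only [gaussNML, maxLik_eq_mul, ← mleVariance_mem, ← mleVariance_notMem]
  rw [div_mul_div_comm]
  exact congrArg _ (setIntegral_subtype_mul_compl (X := fun _ ↦ ℝ) (· ∈ γ) maxGaussLik maxGaussLik
    {x | mleVariance x ∈ Set.Icc a₁ b₁} {y | mleVariance y ∈ Set.Icc a₂ b₂})

end TwoBlocks

theorem stmt_10_general {n : ℕ} (γ : Finset (Fin n)) {a₁ b₁ a₂ b₂ : ℝ} (ha₁ : 0 < a₁)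
    (hab₁ : a₁ < b₁) (ha₂ : 0 < a₂) (hab₂ : a₂ < b₂) {c : Fin n → ℝ} (hSg : 0 < Sg γ c)
    (hSN : 0 < Stot c - Sg γ c) :
    -log (maxLik γ c / ∫ c' in {c' : Fin n → ℝ | Sg γ c' / γ.card ∈ Set.Icc a₁ b₁ ∧
        (Stot c' - Sg γ c') / ((n : ℝ) - γ.card) ∈ Set.Icc a₂ b₂}, maxLik γ c') =
      (γ.card : ℝ) / 2 * log (Sg γ c) + ((n : ℝ) - γ.card) / 2 * log (Stot c - Sg γ c)
        - log (Gamma ((γ.card : ℝ) / 2)) - log (Gamma (((n : ℝ) - γ.card) / 2))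
        + (n : ℝ) / 2 * log π + (log (log (b₁ / a₁)) + log (log (b₂ / a₂))) := by
  rw [← sum_sq_mem_eq_Sg] at hSg
  rw [← sum_sq_notMem_eq_Stot_sub_Sg] at hSN
  rw [maxLik_div_setIntegral,
    log_mul (gaussNML_pos ha₁ hab₁ hSg).ne' (gaussNML_pos ha₂ hab₂ hSN).ne', neg_add,
    neg_log_gaussNML ha₁ hab₁ hSg, neg_log_gaussNML ha₂ hab₂ hSN, sum_sq_mem_eq_Sg,
    sum_sq_notMem_eq_Stot_sub_Sg, cast_card_subtype_notMem, Fintype.card_fin, Fintype.card_coe]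
  ring

theorem stmt_10 (n k : ℕ) (hn : 2 ≤ n) (γ : Finset (Fin n)) (hγ : γ.card = k)
    (hk1 : 1 ≤ k) (hk2 : k ≤ n - 1) (σmin σmax : ℝ) (h0 : 0 < σmin) (hσ : σmin < σmax)
    (c : Fin n → ℝ) (hSg : 0 < Sg γ c) (hSN : 0 < Stot c - Sg γ c)
    (hI : Sg γ c / k ∈ Set.Icc σmin σmax)
    (hN : (Stot c - Sg γ c) / ((n : ℝ) - k) ∈ Set.Icc σmin σmax) :
    -Real.log
      (maxLik γ c /
        ∫ c' in {c' : Fin n → ℝ |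
            σmin ≤ Sg γ c' / k ∧ Sg γ c' / k ≤ σmax ∧
            σmin ≤ (Stot c' - Sg γ c') / ((n : ℝ) - k) ∧
            (Stot c' - Sg γ c') / ((n : ℝ) - k) ≤ σmax},
          maxLik γ c')
    = (k : ℝ) / 2 * Real.log (Sg γ c)
      + ((n : ℝ) - k) / 2 * Real.log (Stot c - Sg γ c)
      - Real.log (Real.Gamma ((k : ℝ) / 2))
      - Real.log (Real.Gamma (((n : ℝ) - k) / 2))
      + (n : ℝ) / 2 * Real.log Real.pi
      + 2 * Real.log (Real.log (σmax / σmin)) := by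
  subst hγ
  simpa only [Set.mem_Icc, and_assoc, two_mul] using stmt_10_general γ h0 hσ h0 hσ hSg hSN
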